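/- arXiv:2109.07656 — 3 statements merged into one kernel-verified Lean document; each statement's English description precedes it below -/
import Mathlib

section
/- Let δ ≥ k ≥ 3 and n ≥ F(k,δ). Let G be a connected graph in A₂(n,k,δ) with the largest Q-index among all graphs in A₂(n,k,δ) and, subject to that, such that the induced subgraph G[Y] has the largest number of edges; let x be the positive eigenvector of Q(G) corresponding to q(G), normalized so that max_{i∈V(G)} x_i = 1. Then the maximum entry of x is attained on Y₁ ∪ Z₁; more precisely, if Y₁ ≠ ∅ then max_{i∈V(G)} x_i = max_{i∈Y₁} x_i, and if Y₁ = ∅ then max_{i∈V(G)} x_i = max_{i∈Z₁} x_i. -/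
/-!
The argument compares entries of the positive eigenvector `x` of `Q(G)`.

If the closed neighbourhood of `v` is contained in that of `u`, the eigenvalue equations give
`x v ≤ x u` (`le_of_closedNbhd`). A vertex adjacent to everything therefore carries the maximum,
which settles the case `Y₁ ≠ ∅`.

If `Y₁ = ∅`, pick `z ∈ Z` not covered by `E'`, which exists because `2|E'| < |Z|`; then `z ∈ Z₁`.
* Vertices of `Z` have entry at most `x z` by domination.
* A vertex `v ∈ Y` is covered by some deleted edge `vw`. Deleting `zw` instead of `vw` gives another
  member of the family, and its Rayleigh quotient at `x` (`dotProduct_qMatrix_le`) exceeds `q(G)` by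
  `((x v + x w)² - (x z + x w)²) / |x|²`. Maximality of `q(G)` forces `x v ≤ x z`.
* A vertex of `X` has degree at most `δ`, so an entry `1` there would give `q(G) ≤ 2δ`, while
  `q(G) > d(z) = n - δ + k - 3 ≥ 2δ`.
-/

open Finset Matrix

attribute [local instance] Classical.propDecidable

namespace QGraph

variable {V : Type*} [Fintype V] [DecidableEq V]

/-- The signless Laplacian matrix `Q(G) = D(G) + A(G)` of a simple graph. -/
noncomputable def qMatrix (G : SimpleGraph V) : Matrix V V ℝ :=
  Matrix.of fun i j =>
    (if i = j then (G.degree i : ℝ) else 0) + (if G.Adj i j then 1 else 0)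

/-- The `Q`-index of `G`: the largest eigenvalue of `Q(G)`. -/
noncomputable def qIndex (G : SimpleGraph V) : ℝ :=
  sSup {μ : ℝ | ∃ x : V → ℝ, x ≠ 0 ∧ qMatrix G *ᵥ x = μ • x}

/-- `G` is `k`-connected: it has more than `k` vertices and removing fewer
than `k` vertices leaves a connected graph. -/
def IsKConnected (G : SimpleGraph V) (k : ℕ) : Prop :=
  k < Fintype.card V ∧
    ∀ S : Finset V, S.card < k → (G.induce ((↑S : Set V)ᶜ)).Connected

/-- The graph `A(n,k,δ) = K_{k-1} ∨ (K_{δ-k+2} ∪ K_{n-δ-1})`. -/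
def graphA (n k δ : ℕ) : SimpleGraph (Fin n) :=
  SimpleGraph.fromRel fun i j =>
    (i : ℕ) < k - 1 ∨ (j : ℕ) < k - 1 ∨
    (k - 1 ≤ (i : ℕ) ∧ (i : ℕ) < δ + 1 ∧ k - 1 ≤ (j : ℕ) ∧ (j : ℕ) < δ + 1) ∨
    (δ + 1 ≤ (i : ℕ) ∧ δ + 1 ≤ (j : ℕ))

/-- `X`: the vertices of degree `δ` in `A(n,k,δ)`. -/
def inX (n k δ : ℕ) (v : Fin n) : Prop := k - 1 ≤ (v : ℕ) ∧ (v : ℕ) < δ + 1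

/-- `Y`: the `k-1` join vertices (degree `n-1`) of `A(n,k,δ)`. -/
def inY (n k : ℕ) (v : Fin n) : Prop := (v : ℕ) < k - 1

/-- `Z`: the vertices of degree `n-δ+k-3` in `A(n,k,δ)`. -/
def inZ (n δ : ℕ) (v : Fin n) : Prop := δ + 1 ≤ (v : ℕ)

noncomputable def F (k δ : ℕ) : ℝ :=
  ((k : ℝ) ^ 2 + 2 * k - 3) * (δ : ℝ) ^ 2
    - (2 * (k : ℝ) ^ 3 - (k : ℝ) ^ 2 - 17 * k + 8) * (δ : ℝ)
    + ((k : ℝ) ^ 4 - 3 * (k : ℝ) ^ 3 - 8 * (k : ℝ) ^ 2 + 23 * k + 4)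

/-- `E'` is a set of edges of `A(n,k,δ)` with both endpoints in `Y ∪ Z`. -/
def EdgeConds (n k δ : ℕ) (E' : Finset (Sym2 (Fin n))) : Prop :=
  (↑E' : Set (Sym2 (Fin n))) ⊆ (graphA n k δ).edgeSet ∧
    ∀ e ∈ E', ∀ v ∈ e, inY n k v ∨ inZ n δ v

/-- Membership (up to isomorphism) in the family `𝒜₁(n,k,δ)`. -/
def memA1 (n k δ : ℕ) (G : SimpleGraph (Fin n)) : Prop :=
  ∃ E' : Finset (Sym2 (Fin n)), EdgeConds n k δ E' ∧
    E'.card ≤ (δ - k + 2) * (k - 1) / 4 ∧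
    Nonempty (G ≃g (graphA n k δ).deleteEdges (↑E' : Set (Sym2 (Fin n))))

/-- Conditions defining a concrete member of `𝒜₂(n,k,δ)`. -/
def A2Conds (n k δ : ℕ) (E' : Finset (Sym2 (Fin n))) : Prop :=
  EdgeConds n k δ E' ∧ E'.card = (δ - k + 2) * (k - 1) / 4 + 1

/-- Membership (up to isomorphism) in the family `𝒜₂(n,k,δ)`. -/
def memA2 (n k δ : ℕ) (G : SimpleGraph (Fin n)) : Prop :=
  ∃ E' : Finset (Sym2 (Fin n)), A2Conds n k δ E' ∧
    Nonempty (G ≃g (graphA n k δ).deleteEdges (↑E' : Set (Sym2 (Fin n))))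

/-- The number of edges of `G` with both endpoints satisfying `P`. -/
noncomputable def edgesWithin (G : SimpleGraph V) (P : V → Prop) : ℕ :=
  (G.edgeFinset.filter fun e => ∀ v ∈ e, P v).card

/-! ### The signless Laplacian and its largest eigenvalue -/

lemma qMatrix_mulVec_apply (G : SimpleGraph V) (x : V → ℝ) (i : V) :
    (qMatrix G *ᵥ x) i = (G.degree i : ℝ) * x i + ∑ j, if G.Adj i j then x j else 0 := by
  simp [qMatrix, Matrix.mulVec, dotProduct, add_mul, Finset.sum_add_distrib, ite_mul]

lemma degree_eq_sum {V : Type*} [Fintype V] (G : SimpleGraph V) (i : V) :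
    (G.degree i : ℝ) = ∑ j, if G.Adj i j then (1 : ℝ) else 0 := by
  rw [← G.card_neighborFinset_eq_degree, Finset.sum_boole, SimpleGraph.neighborFinset_eq_filter]

lemma dotProduct_qMatrix (G : SimpleGraph V) (x : V → ℝ) :
    2 * (x ⬝ᵥ (qMatrix G *ᵥ x)) = ∑ i, ∑ j, if G.Adj i j then (x i + x j) ^ 2 else 0 := by
  have h1 : x ⬝ᵥ (qMatrix G *ᵥ x) =
      ∑ i, ∑ j, if G.Adj i j then (x i ^ 2 + x i * x j) else 0 := by
    unfold dotProduct
    refine Finset.sum_congr rfl fun i _ => ?_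
    rw [qMatrix_mulVec_apply, degree_eq_sum, Finset.sum_mul, ← Finset.sum_add_distrib,
      Finset.mul_sum]
    refine Finset.sum_congr rfl fun j _ => ?_
    split_ifs <;> ring
  have h2 : x ⬝ᵥ (qMatrix G *ᵥ x) =
      ∑ i, ∑ j, if G.Adj i j then (x j ^ 2 + x i * x j) else 0 := by
    rw [h1, Finset.sum_comm]
    refine Finset.sum_congr rfl fun i _ => Finset.sum_congr rfl fun j _ => ?_
    simp only [G.adj_comm j i]
    split_ifs <;> ring
  rw [two_mul]
  nth_rewrite 1 [h1]
  rw [h2, ← Finset.sum_add_distrib]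
  refine Finset.sum_congr rfl fun i _ => ?_
  rw [← Finset.sum_add_distrib]
  refine Finset.sum_congr rfl fun j _ => ?_
  split_ifs <;> ring

lemma qMatrix_isHermitian (G : SimpleGraph V) : (qMatrix G).IsHermitian := by
  ext i j
  by_cases h : i = j
  · subst h; simp [qMatrix]
  · have h' : j ≠ i := fun e => h e.symm
    simp [qMatrix, h, h', G.adj_comm]

lemma le_qIndex (G : SimpleGraph V) {μ : ℝ} {v : V → ℝ} (hv : v ≠ 0)
    (h : qMatrix G *ᵥ v = μ • v) : μ ≤ qIndex G := by
  refine le_csSup ?_ ⟨v, hv, h⟩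
  refine ((Module.End.finite_hasEigenvalue (Matrix.toLin' (qMatrix G))).subset ?_).bddAbove
  rintro ν ⟨w, hw, hw'⟩
  exact Module.End.hasEigenvalue_of_hasEigenvector (x := w)
    (Module.End.hasEigenvector_iff.2 ⟨Module.End.mem_eigenspace_iff.2 (by simpa using hw'), hw⟩)

/-- Rayleigh's principle: `q(G) · 1 - Q(G)` is positive semidefinite, since each of its eigenvalues
is `q(G) - ν` for an eigenvalue `ν` of `Q(G)`. -/
lemma dotProduct_qMatrix_le (G : SimpleGraph V) (x : V → ℝ) :
    x ⬝ᵥ (qMatrix G *ᵥ x) ≤ qIndex G * (x ⬝ᵥ x) := by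
  set c := qIndex G with hc
  have hH : (c • (1 : Matrix V V ℝ) - qMatrix G).IsHermitian := by
    refine Matrix.IsHermitian.sub ?_ (qMatrix_isHermitian G)
    ext i j
    simp [Matrix.one_apply, eq_comm]
  have hP : (c • (1 : Matrix V V ℝ) - qMatrix G).PosSemidef := by
    rw [hH.posSemidef_iff_eigenvalues_nonneg]
    intro i
    have h := hH.mulVec_eigenvectorBasis i
    have hne : (⇑(hH.eigenvectorBasis i) : V → ℝ) ≠ 0 :=
      (WithLp.ofLp_eq_zero 2).ne.2 (hH.eigenvectorBasis.orthonormal.ne_zero i)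
    have h3 : qMatrix G *ᵥ (⇑(hH.eigenvectorBasis i) : V → ℝ)
        = (c - hH.eigenvalues i) • (⇑(hH.eigenvectorBasis i) : V → ℝ) := by
      rw [sub_smul, ← h, Matrix.sub_mulVec, Matrix.smul_mulVec, Matrix.one_mulVec]
      abel
    have := le_qIndex G hne h3
    simp only [Pi.zero_apply]
    linarith
  have h := hP.dotProduct_mulVec_nonneg x
  simp only [star_trivial, Matrix.sub_mulVec, Matrix.smul_mulVec, Matrix.one_mulVec,
    dotProduct_sub, dotProduct_smul, smul_eq_mul] at h
  linarith

/-! ### Comparing entries of a positive eigenvector -/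

lemma eig_apply {G : SimpleGraph V} {x : V → ℝ} {q : ℝ} (heig : qMatrix G *ᵥ x = q • x) (i : V) :
    (q - G.degree i) * x i = ∑ j ∈ G.neighborFinset i, x j := by
  have h := congrFun heig i
  rw [qMatrix_mulVec_apply, ← Finset.sum_filter] at h
  rw [SimpleGraph.neighborFinset_eq_filter]
  simp only [Pi.smul_apply, smul_eq_mul] at h
  linarith

lemma degree_le_eig {G : SimpleGraph V} {x : V → ℝ} {q : ℝ} (heig : qMatrix G *ᵥ x = q • x)
    (hx : ∀ v, 0 < x v) (i : V) : (G.degree i : ℝ) ≤ q := by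
  have h := eig_apply heig i
  have h2 : 0 ≤ (q - G.degree i) * x i := by
    rw [h]; exact Finset.sum_nonneg fun j _ => (hx j).le
  have := nonneg_of_mul_nonneg_left h2 (hx i)
  linarith

lemma degree_lt_eig {G : SimpleGraph V} {x : V → ℝ} {q : ℝ} (heig : qMatrix G *ᵥ x = q • x)
    (hx : ∀ v, 0 < x v) (i : V) (hi : 0 < G.degree i) : (G.degree i : ℝ) < q := by
  have h := eig_apply heig i
  have h2 : 0 < (q - G.degree i) * x i := by
    rw [h]
    refine Finset.sum_pos (fun j _ => hx j) ?_
    rwa [← Finset.card_pos, SimpleGraph.card_neighborFinset_eq_degree]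
  have := pos_of_mul_pos_left h2 (hx i).le
  linarith

/-- Domination: in a positive eigenvector, a vertex has at least the entry of any vertex whose
closed neighbourhood it contains. -/
lemma le_of_closedNbhd {G : SimpleGraph V} {x : V → ℝ} {q : ℝ} (heig : qMatrix G *ᵥ x = q • x)
    (hx : ∀ v, 0 < x v) (v u : V)
    (h : insert v (G.neighborFinset v) ⊆ insert u (G.neighborFinset u)) : x v ≤ x u := by
  have hv := eig_apply heig v
  have hu := eig_apply heig u
  have hdu := degree_le_eig heig hx u
  have hs : ∑ j ∈ insert v (G.neighborFinset v), x j ≤ ∑ j ∈ insert u (G.neighborFinset u), x j :=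
    Finset.sum_le_sum_of_subset_of_nonneg h fun j _ _ => (hx j).le
  have hc := Finset.card_le_card h
  have nv : v ∉ G.neighborFinset v := by simp
  have nu : u ∉ G.neighborFinset u := by simp
  rw [Finset.sum_insert nv, Finset.sum_insert nu] at hs
  rw [Finset.card_insert_of_notMem nv, Finset.card_insert_of_notMem nu,
    SimpleGraph.card_neighborFinset_eq_degree, SimpleGraph.card_neighborFinset_eq_degree] at hc
  have hd : (G.degree v : ℝ) ≤ G.degree u := by exact_mod_cast (by omega)
  by_contra! hlt
  nlinarith [hx u, hx v, mul_le_mul_of_nonneg_right hd (hx v).le]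

/-! ### Exchanging one deleted edge -/

lemma sum_pair (a b : V) (hab : a ≠ b) (x : V → ℝ) :
    (∑ i, ∑ j, if s(i, j) = s(a, b) then (x i + x j) ^ 2 else 0) = 2 * (x a + x b) ^ 2 := by
  have h : ∀ i j, (if s(i, j) = s(a, b) then (x i + x j) ^ 2 else 0) =
      (if i = a then (if j = b then (x a + x b) ^ 2 else 0) else 0) +
      (if i = b then (if j = a then (x a + x b) ^ 2 else 0) else 0) := by
    intro i j
    simp only [Sym2.eq_iff]
    by_cases h1 : i = a <;> by_cases h2 : j = b <;> by_cases h3 : i = b <;> by_cases h4 : j = a <;>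
      simp_all [add_comm]
  simp only [h, Finset.sum_add_distrib]
  simp
  ring

/-- Deleting `zw` in place of `vw` changes the quadratic form of the signless Laplacian by the
difference of the two edge terms. -/
lemma form_exchange (H : SimpleGraph V) (E : Finset (Sym2 V)) (v w z : V) (hvw : s(v, w) ∈ E)
    (hAvw : H.Adj v w) (hAzw : H.Adj z w) (hzw : s(z, w) ∉ E) (x : V → ℝ) :
    x ⬝ᵥ (qMatrix (H.deleteEdges
        (↑(insert s(z, w) (E.erase s(v, w))) : Set (Sym2 V))) *ᵥ x) =
      x ⬝ᵥ (qMatrix (H.deleteEdges (↑E : Set (Sym2 V))) *ᵥ x)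
        + (x v + x w) ^ 2 - (x z + x w) ^ 2 := by
  have h1 := dotProduct_qMatrix (H.deleteEdges
        (↑(insert s(z, w) (E.erase s(v, w))) : Set (Sym2 V))) x
  have h2 := dotProduct_qMatrix (H.deleteEdges (↑E : Set (Sym2 V))) x
  have h3 := sum_pair v w hAvw.ne x
  have h4 := sum_pair z w hAzw.ne x
  have key : ∀ i j, (if (H.deleteEdges
        (↑(insert s(z, w) (E.erase s(v, w))) : Set (Sym2 V))).Adj i j
          then (x i + x j) ^ 2 else 0) + (if s(i, j) = s(z, w) then (x i + x j) ^ 2 else 0) =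
      (if (H.deleteEdges (↑E : Set (Sym2 V))).Adj i j then (x i + x j) ^ 2 else 0)
        + (if s(i, j) = s(v, w) then (x i + x j) ^ 2 else 0) := by
    intro i j
    have hA : H.Adj i j ↔ s(i, j) ∈ H.edgeSet := Iff.rfl
    have hA1 : s(v, w) ∈ H.edgeSet := hAvw
    have hA2 : s(z, w) ∈ H.edgeSet := hAzw
    simp only [SimpleGraph.deleteEdges_adj, hA, Finset.mem_coe, Finset.mem_insert,
      Finset.mem_erase]
    generalize (x i + x j) ^ 2 = y
    generalize s(i, j) = e
    by_cases e1 : e = s(z, w)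
    · subst e1
      have : s(z, w) ≠ s(v, w) := fun h => hzw (h ▸ hvw)
      simp [hA2, hzw, this]
    · by_cases e2 : e = s(v, w)
      · subst e2
        simp [hA1, hvw, e1]
      · simp [e1, e2]
  have hs : 2 * (x ⬝ᵥ (qMatrix (H.deleteEdges
        (↑(insert s(z, w) (E.erase s(v, w))) : Set (Sym2 V))) *ᵥ x)) + 2 * (x z + x w) ^ 2 =
      2 * (x ⬝ᵥ (qMatrix (H.deleteEdges (↑E : Set (Sym2 V))) *ᵥ x)) + 2 * (x v + x w) ^ 2 := by
    rw [h1, h2, ← h3, ← h4]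
    simp only [← Finset.sum_add_distrib]
    refine Finset.sum_congr rfl fun i _ => Finset.sum_congr rfl fun j _ => ?_
    convert key i j
  linarith

/-! ### The graph `A(n,k,δ)` and the size of `n` -/

lemma graphA_adj (n k δ : ℕ) (i j : Fin n) : (graphA n k δ).Adj i j ↔ i ≠ j ∧
    ((i : ℕ) < k - 1 ∨ (j : ℕ) < k - 1 ∨ ((i : ℕ) < δ + 1 ∧ (j : ℕ) < δ + 1) ∨
    (δ + 1 ≤ (i : ℕ) ∧ δ + 1 ≤ (j : ℕ))) := by
  unfold graphA
  rw [SimpleGraph.fromRel_adj]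
  refine and_congr_right fun _ => ?_
  omega

/-- With `k = 3 + m` and `δ = k + t`, the difference of `F k δ` and the left-hand side is a polynomial
in `m` and `t` with nonnegative coefficients. -/
lemma n_large (n k δ : ℕ) (hk : 3 ≤ k) (hδk : k ≤ δ) (hn : (n : ℝ) ≥ F k δ) :
    3 * δ + (δ - k + 2) * (k - 1) + 10 ≤ n := by
  obtain ⟨t, rfl⟩ := Nat.exists_eq_add_of_le hδk
  obtain ⟨m, rfl⟩ := Nat.exists_eq_add_of_le hk
  have e1 : 3 + m + t - (3 + m) + 2 = t + 2 := by omega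
  have e2 : 3 + m - 1 = m + 2 := by omega
  rw [e1, e2]
  have : ((3 * (3 + m + t) + (t + 2) * (m + 2) + 10 : ℕ) : ℝ) ≤ n := by
    refine le_trans ?_ hn
    unfold F
    push_cast
    have hm : (0 : ℝ) ≤ m := Nat.cast_nonneg m
    have ht : (0 : ℝ) ≤ t := Nat.cast_nonneg t
    rw [← sub_nonneg]
    ring_nf
    positivity
  exact_mod_cast this

/-- A vertex of `Z` not covered by the deleted edges. -/
lemma exists_free (n δ : ℕ) (E' : Finset (Sym2 (Fin n)))
    (hcard : 2 * E'.card + δ + 1 < n) :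
    ∃ z : Fin n, inZ n δ z ∧ ∀ e ∈ E', z ∉ e := by
  by_contra! hcon
  have hsub : (Finset.univ.filter fun z : Fin n => δ + 1 ≤ (z : ℕ)) ⊆
      E'.biUnion fun e => e.toFinset := by
    intro z hz
    obtain ⟨e, he, hze⟩ := hcon z (Finset.mem_filter.1 hz).2
    exact Finset.mem_biUnion.2 ⟨e, he, by simpa using hze⟩
  have h1 := Finset.card_le_card hsub
  have h2 : (E'.biUnion fun e => e.toFinset).card ≤ E'.card * 2 := by
    refine Finset.card_biUnion_le_card_mul _ _ _ fun e _ => ?_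
    rw [Sym2.card_toFinset]
    split_ifs <;> omega
  have h3 : (Finset.univ.filter fun z : Fin n => δ + 1 ≤ (z : ℕ)) =
      Finset.Ici (⟨δ + 1, by omega⟩ : Fin n) := by
    ext z; simp [Fin.le_def]
  rw [h3, Fin.card_Ici] at h1
  simp only at h1
  omega

lemma card_YZ (n k δ : ℕ) (h : k ≤ δ) (hn : δ + 1 < n) :
    (Finset.univ.filter fun z : Fin n => (z : ℕ) < k - 1 ∨ δ + 1 ≤ (z : ℕ)).card
      = (k - 1) + (n - (δ + 1)) := by
  rw [Finset.filter_or, Finset.card_union_of_disjoint]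
  · congr 1
    · have : (Finset.univ.filter fun z : Fin n => (z : ℕ) < k - 1) =
        Finset.Iio (⟨k - 1, by omega⟩ : Fin n) := by
        ext z; simp [Fin.lt_def]
      rw [this, Fin.card_Iio]
    · have : (Finset.univ.filter fun z : Fin n => δ + 1 ≤ (z : ℕ)) =
        Finset.Ici (⟨δ + 1, by omega⟩ : Fin n) := by
        ext z; simp [Fin.le_def]
      rw [this, Fin.card_Ici]
  · rw [Finset.disjoint_filter]
    intro z _ h1 h2
    omega

/-- Let `G` be the connected member of `𝒜₂(n,k,δ)` with the largest
`Q`-index and, subject to that, with `G[Y]` having the most edges; let `x` be the positive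
eigenvector of `Q(G)` normalized so `max x = 1`. Then the maximum entry of `x` is attained
on `Y₁` if `Y₁ ≠ ∅`, and on `Z₁` if `Y₁ = ∅`. -/
theorem stmt15 (n k δ : ℕ) (hk : 3 ≤ k) (hδk : k ≤ δ) (hn : (n : ℝ) ≥ F k δ)
    (E' : Finset (Sym2 (Fin n))) (hE : A2Conds n k δ E')
    (G : SimpleGraph (Fin n))
    (hG : G = (graphA n k δ).deleteEdges (↑E' : Set (Sym2 (Fin n))))
    (hconn : G.Connected)
    (hmax : ∀ E'' : Finset (Sym2 (Fin n)), A2Conds n k δ E'' →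
      qIndex ((graphA n k δ).deleteEdges (↑E'' : Set (Sym2 (Fin n)))) ≤ qIndex G)
    (hedges : ∀ E'' : Finset (Sym2 (Fin n)), A2Conds n k δ E'' →
      qIndex ((graphA n k δ).deleteEdges (↑E'' : Set (Sym2 (Fin n)))) = qIndex G →
      edgesWithin ((graphA n k δ).deleteEdges (↑E'' : Set (Sym2 (Fin n)))) (inY n k) ≤
        edgesWithin G (inY n k))
    (x : Fin n → ℝ) (hx : ∀ v, 0 < x v)
    (heig : qMatrix G *ᵥ x = qIndex G • x)
    (hle : ∀ v, x v ≤ 1) (hattain : ∃ v, x v = 1) :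
    ((∃ v, inY n k v ∧ G.degree v = n - 1) →
        ∃ i, (inY n k i ∧ G.degree i = n - 1) ∧ x i = 1) ∧
    ((¬ ∃ v, inY n k v ∧ G.degree v = n - 1) →
        ∃ i, (inZ n δ i ∧ G.degree i = n - δ + k - 3) ∧ x i = 1) := by
  have hbig := n_large n k δ hk hδk hn
  constructor
  · rintro ⟨u, huY, hud⟩
    refine ⟨u, ⟨huY, hud⟩, ?_⟩
    obtain ⟨v, hv⟩ := hattain
    refine le_antisymm (hle u) ?_
    rw [← hv]
    refine le_of_closedNbhd heig hx v u ?_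
    have huniv : insert u (G.neighborFinset u) = Finset.univ := by
      rw [← Finset.card_eq_iff_eq_univ, Finset.card_insert_of_notMem (by simp),
        SimpleGraph.card_neighborFinset_eq_degree, hud, Fintype.card_fin]
      omega
    rw [huniv]
    exact Finset.subset_univ _
  · intro hY
    obtain ⟨⟨hEsub, hEYZ⟩, hEcard⟩ := hE
    have hM : 2 * E'.card + δ + 1 < n := by
      rw [hEcard]; omega
    obtain ⟨z, hzZ, hzE⟩ := exists_free n δ E' hM
    have hadj : ∀ i j, G.Adj i j ↔ (graphA n k δ).Adj i j ∧ s(i, j) ∉ E' := by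
      intro i j
      rw [hG]; simp [SimpleGraph.deleteEdges_adj]
    have hzadj : ∀ j, G.Adj z j ↔ z ≠ j ∧ ((j : ℕ) < k - 1 ∨ δ + 1 ≤ (j : ℕ)) := by
      intro j
      have h1 : s(z, j) ∉ E' := fun h => hzE _ h (Sym2.mem_mk_left z j)
      have h2 : δ + 1 ≤ (z : ℕ) := hzZ
      rw [hadj, graphA_adj]
      simp only [h1, not_false_eq_true, and_true]
      refine and_congr_right fun _ => ?_
      omega
    have hzN : insert z (G.neighborFinset z) =
        Finset.univ.filter fun j : Fin n => (j : ℕ) < k - 1 ∨ δ + 1 ≤ (j : ℕ) := by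
      ext j
      simp only [Finset.mem_insert, SimpleGraph.mem_neighborFinset, hzadj, Finset.mem_filter,
        Finset.mem_univ, true_and]
      have h2 : δ + 1 ≤ (z : ℕ) := hzZ
      constructor
      · rintro (rfl | h)
        · exact Or.inr h2
        · exact h.2
      · intro h
        by_cases hj : j = z
        · exact Or.inl hj
        · exact Or.inr ⟨fun e => hj e.symm, h⟩
    have hzdeg : G.degree z = n - δ + k - 3 := by
      have h1 := congrArg Finset.card hzN
      rw [Finset.card_insert_of_notMem (by simp), SimpleGraph.card_neighborFinset_eq_degree,
        card_YZ n k δ hδk (by omega)] at h1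
      omega
    refine ⟨z, ⟨hzZ, hzdeg⟩, ?_⟩
    obtain ⟨v, hv⟩ := hattain
    refine le_antisymm (hle z) ?_
    by_cases hvZ : δ + 1 ≤ (v : ℕ)
    · rw [← hv]
      refine le_of_closedNbhd heig hx v z ?_
      rw [hzN]
      intro j hj
      rw [Finset.mem_insert, SimpleGraph.mem_neighborFinset, hadj, graphA_adj] at hj
      simp only [Finset.mem_filter, Finset.mem_univ, true_and]
      rcases hj with rfl | hj
      · exact Or.inr hvZ
      · omega
    by_cases hvY : (v : ℕ) < k - 1
    · -- `v ∈ Y` is covered by a deleted edge, as otherwise it would have full degree.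
      have hcov : ∃ w, s(v, w) ∈ E' := by
        by_contra! hno
        refine hY ⟨v, hvY, ?_⟩
        have huniv : insert v (G.neighborFinset v) = Finset.univ := by
          ext j
          simp only [Finset.mem_insert, SimpleGraph.mem_neighborFinset, hadj, graphA_adj,
            Finset.mem_univ, iff_true]
          by_cases hj : j = v
          · exact Or.inl hj
          · exact Or.inr ⟨⟨fun e => hj e.symm, Or.inl hvY⟩, hno j⟩
        have h1 := congrArg Finset.card huniv
        rw [Finset.card_insert_of_notMem (by simp), SimpleGraph.card_neighborFinset_eq_degree,
          Finset.card_univ, Fintype.card_fin] at h1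
        omega
      obtain ⟨w, hvw⟩ := hcov
      have hAvw : (graphA n k δ).Adj v w := hEsub hvw
      have hwYZ := hEYZ _ hvw w (Sym2.mem_mk_right v w)
      have hzw : s(z, w) ∉ E' := fun h => hzE _ h (Sym2.mem_mk_left z w)
      have hzw_ne : z ≠ w := by
        rintro rfl
        exact hzE _ hvw (Sym2.mem_mk_right v z)
      have hAzw : (graphA n k δ).Adj z w := by
        rw [graphA_adj]
        refine ⟨hzw_ne, ?_⟩
        unfold inZ at hzZ
        unfold inY inZ at hwYZ
        omega
      have hA2 : A2Conds n k δ (insert s(z, w) (E'.erase s(v, w))) := by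
        refine ⟨⟨?_, ?_⟩, ?_⟩
        · intro e he
          rw [Finset.mem_coe, Finset.mem_insert, Finset.mem_erase] at he
          rcases he with rfl | he
          · exact hAzw
          · exact hEsub he.2
        · intro e he u hu
          rw [Finset.mem_insert, Finset.mem_erase] at he
          rcases he with rfl | he
          · rcases Sym2.mem_iff.1 hu with rfl | rfl
            · exact Or.inr hzZ
            · exact hwYZ
          · exact hEYZ e he.2 u hu
        · rw [Finset.card_insert_of_notMem (by simp [hzw]), Finset.card_erase_of_mem hvw, hEcard]
          omega
      have hq := hmax _ hA2
      have hform := form_exchange (graphA n k δ) E' v w z hvw hAvw hAzw hzw x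
      have hR := dotProduct_qMatrix_le ((graphA n k δ).deleteEdges
        (↑(insert s(z, w) (E'.erase s(v, w))) : Set (Sym2 (Fin n)))) x
      rw [← hG, heig, dotProduct_smul, smul_eq_mul] at hform
      have hxx : 0 ≤ x ⬝ᵥ x := Finset.sum_nonneg fun i _ => mul_self_nonneg (x i)
      have h5 := mul_le_mul_of_nonneg_right hq hxx
      have h6 : (x v + x w) ^ 2 ≤ (x z + x w) ^ 2 := by linarith
      have h7 := (sq_le_sq₀ (add_pos (hx v) (hx w)).le (add_pos (hx z) (hx w)).le).1 h6
      linarith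
    · exfalso
      have h1 := eig_apply heig v
      have h2 : ∑ j ∈ G.neighborFinset v, x j ≤ G.degree v := by
        rw [← SimpleGraph.card_neighborFinset_eq_degree]
        simpa using Finset.sum_le_card_nsmul (G.neighborFinset v) x 1 fun j _ => hle j
      have h3 : G.degree v ≤ δ := by
        have hsub : insert v (G.neighborFinset v) ⊆
            Finset.Iio (⟨δ + 1, by omega⟩ : Fin n) := by
          intro j hj
          rw [Finset.mem_insert, SimpleGraph.mem_neighborFinset, hadj, graphA_adj] at hj
          simp only [Finset.mem_Iio, Fin.lt_def]
          rcases hj with rfl | hj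
          · omega
          · omega
        have h4 := Finset.card_le_card hsub
        rw [Finset.card_insert_of_notMem (by simp), SimpleGraph.card_neighborFinset_eq_degree,
          Fin.card_Iio] at h4
        simp only at h4
        omega
      have h5 := degree_lt_eig heig hx z (by omega)
      have h6 : 2 * δ ≤ G.degree z := by omega
      have h7 : (2 : ℝ) * δ ≤ G.degree z := by exact_mod_cast h6
      have h8 : (G.degree v : ℝ) ≤ δ := by exact_mod_cast h3
      rw [hv] at h1
      linarith

end QGraph
end

section
/- Let δ ≥ k ≥ 3 and n ≥ F(k,δ). Let G be a connected graph in A₂(n,k,δ) with the largest Q-index among all graphs in A₂(n,k,δ) and, subject to that, such that the induced subgraph G[Y] has the largest number of edges; assume q(G) > n−1, and let x be the positive eigenvector of Q(G) corresponding to q(G), normalized so that max_{i∈V(G)} x_i = 1. Then max_{i∈V(G)} x_i − min_{j∈Y∪Z} x_j ≤ ((δ−k+2)(k+3) + 4) / (2(q(G) − n + 1)). -/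
/-!
The bound holds because a vertex `j ∈ Y ∪ Z` has few non-neighbours. Read the eigenvalue
equation at a vertex `v` as `q x_v = ∑_{w ~ v} (x_v + x_w)`, and put `T = ∑_w x_w`.

At a vertex `u` with `x_u = 1`, extending the sum to all `w ≠ u` gives `q ≤ (n - 2) + T`.
At `j`, let `a` be the number of vertices `w ≠ j` that are not adjacent to `j`. Every missing term
`x_j + x_w` is at most `2`, so `q x_j ≥ (n - 2) x_j + T - 2a`. Subtracting,
`(q - n + 2)(1 - x_j) ≤ 2a`, which is `eigenvector_gap`.

A non-neighbour of `j` either lies in `X`, a set of `δ - k + 2` vertices, or is joined to `j` by an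
edge of `E'`, so `a ≤ (δ - k + 2) + |E'|` (`card_nonNeighbors_le`). Since
`|E'| ≤ (δ - k + 2)(k - 1)/4 + 1`, this gives `2a ≤ ((δ - k + 2)(k + 3) + 4)/2`.
-/

open Finset Matrix

attribute [local instance] Classical.propDecidable

namespace QGraph

variable {V : Type*} [Fintype V] [DecidableEq V]

/-- The vertices other than `v` that are not adjacent to `v`. -/
noncomputable def nonNeighbors (G : SimpleGraph V) (v : V) : Finset V :=
  Finset.univ.filter fun w => w ≠ v ∧ ¬ G.Adj v w

/-- The action of `Q(G)` at `v`, written as the sum over all vertices corrected for the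
non-neighbours of `v` and for `v` itself. -/
lemma qMatrix_mulVec_apply_s16 (G : SimpleGraph V) (x : V → ℝ) (v : V) :
    (qMatrix G *ᵥ x) v =
      ((Fintype.card V : ℝ) - 2) * x v + ∑ w, x w - ∑ w ∈ nonNeighbors G v, (x v + x w) := by
  have h1 : (qMatrix G *ᵥ x) v = ∑ w, if G.Adj v w then x v + x w else 0 := by
    have hdeg : (G.degree v : ℝ) = ∑ w, if G.Adj v w then (1 : ℝ) else 0 := by
      rw [← SimpleGraph.card_neighborFinset_eq_degree, SimpleGraph.neighborFinset_eq_filter,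
        Finset.sum_boole]
    simp only [Matrix.mulVec, dotProduct, qMatrix, Matrix.of_apply, add_mul,
      Finset.sum_add_distrib, ite_mul, zero_mul, one_mul, Finset.sum_ite_eq, Finset.mem_univ,
      if_true]
    rw [hdeg, Finset.sum_mul, ← Finset.sum_add_distrib]
    refine Finset.sum_congr rfl fun w _ => ?_
    split_ifs <;> simp
  have h2 : ∀ w, (if G.Adj v w then x v + x w else 0) =
      (x v + x w) - (if w ≠ v ∧ ¬ G.Adj v w then x v + x w else 0)
        - (if w = v then x v + x w else 0) := by
    intro w
    by_cases hw : w = v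
    · subst hw; simp
    · by_cases ha : G.Adj v w <;> simp [hw, ha]
  rw [h1, Finset.sum_congr rfl fun w _ => h2 w, Finset.sum_sub_distrib, Finset.sum_sub_distrib,
    Finset.sum_ite_eq', Finset.sum_add_distrib, nonNeighbors, Finset.sum_filter]
  simp
  ring

/-- For a nonnegative eigenvector with maximum entry `1`, the entry at `j` is close to `1` when
`j` has few non-neighbours. -/
lemma eigenvector_gap (G : SimpleGraph V) (q : ℝ) (x : V → ℝ) (hx : ∀ v, 0 ≤ x v)
    (heig : qMatrix G *ᵥ x = q • x) (hle : ∀ v, x v ≤ 1) (hattain : ∃ v, x v = 1) (j : V) :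
    (q - Fintype.card V + 2) * (1 - x j) ≤ 2 * ((nonNeighbors G j).card : ℝ) := by
  obtain ⟨u, hu⟩ := hattain
  have hqu := (qMatrix_mulVec_apply_s16 G x u).symm.trans (congrFun heig u)
  have hqj := (qMatrix_mulVec_apply_s16 G x j).symm.trans (congrFun heig j)
  simp only [Pi.smul_apply, smul_eq_mul] at hqu hqj
  have hsu : 0 ≤ ∑ w ∈ nonNeighbors G u, (x u + x w) :=
    Finset.sum_nonneg fun w _ => add_nonneg (hx u) (hx w)
  have hsj : ∑ w ∈ nonNeighbors G j, (x j + x w) ≤ (nonNeighbors G j).card • (2 : ℝ) :=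
    Finset.sum_le_card_nsmul _ _ _ fun w _ => by linarith [hle j, hle w]
  rw [nsmul_eq_mul] at hsj
  rw [hu] at hqu hsu
  linarith

/-- A vertex of `Y ∪ Z` misses at most the `δ - k + 2` vertices of `X` and the vertices separated
from it by a deleted edge. -/
lemma card_nonNeighbors_le (n k δ : ℕ) (hk : 1 ≤ k) (hδk : k ≤ δ) (E' : Finset (Sym2 (Fin n)))
    (j : Fin n) (hj : inY n k j ∨ inZ n δ j) :
    (nonNeighbors ((graphA n k δ).deleteEdges (↑E' : Set (Sym2 (Fin n)))) j).card ≤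
      (δ - k + 2) + E'.card := by
  have hX : (Finset.univ.filter fun w : Fin n => inX n k δ w).card ≤ δ - k + 2 := by
    have h : (Finset.univ.filter fun w : Fin n => inX n k δ w).card ≤
        (Finset.Ico (k - 1) (δ + 1)).card :=
      Finset.card_le_card_of_injOn (fun w => (w : ℕ))
        (fun w hw => by simpa [inX] using hw) (fun a _ b _ hab => Fin.ext hab)
    rw [Nat.card_Ico] at h
    omega
  have hE : (Finset.univ.filter fun w : Fin n => s(j, w) ∈ E').card ≤ E'.card :=
    Finset.card_le_card_of_injOn (fun w => s(j, w)) (fun w hw => by simpa using hw)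
      (fun a _ b _ hab => Sym2.congr_right.mp hab)
  have hsub : nonNeighbors ((graphA n k δ).deleteEdges (↑E' : Set (Sym2 (Fin n)))) j ⊆
      (Finset.univ.filter fun w : Fin n => inX n k δ w) ∪
        (Finset.univ.filter fun w : Fin n => s(j, w) ∈ E') := by
    intro w hw
    simp only [nonNeighbors, Finset.mem_filter, Finset.mem_univ, true_and,
      SimpleGraph.deleteEdges_adj, Finset.mem_coe, graphA, SimpleGraph.fromRel_adj] at hw
    simp only [Finset.mem_union, Finset.mem_filter, Finset.mem_univ, true_and]
    obtain ⟨hne, hna⟩ := hw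
    by_contra hcon
    push Not at hcon
    obtain ⟨hwX, hwE⟩ := hcon
    refine hna ⟨⟨hne.symm, Or.inl ?_⟩, hwE⟩
    simp only [inX, inY, inZ] at hwX hj
    omega
  exact (Finset.card_le_card hsub).trans ((Finset.card_union_le _ _).trans (by omega))

/-- Lemma 3.7. Let `G` be the connected member of `𝒜₂(n,k,δ)` with the
largest `Q`-index and, subject to that, with `G[Y]` having the most edges; assume
`q(G) > n-1` and let `x` be the positive eigenvector of `Q(G)` normalized so `max x = 1`.
Then `max_{i} x_i - min_{j ∈ Y∪Z} x_j ≤ ((δ-k+2)(k+3)+4) / (2(q(G)-n+1))`. -/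
theorem stmt16 (n k δ : ℕ) (hk : 3 ≤ k) (hδk : k ≤ δ) (hn : (n : ℝ) ≥ F k δ)
    (E' : Finset (Sym2 (Fin n))) (hE : A2Conds n k δ E')
    (G : SimpleGraph (Fin n))
    (hG : G = (graphA n k δ).deleteEdges (↑E' : Set (Sym2 (Fin n))))
    (hconn : G.Connected)
    (hmax : ∀ E'' : Finset (Sym2 (Fin n)), A2Conds n k δ E'' →
      qIndex ((graphA n k δ).deleteEdges (↑E'' : Set (Sym2 (Fin n)))) ≤ qIndex G)
    (hedges : ∀ E'' : Finset (Sym2 (Fin n)), A2Conds n k δ E'' →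
      qIndex ((graphA n k δ).deleteEdges (↑E'' : Set (Sym2 (Fin n)))) = qIndex G →
      edgesWithin ((graphA n k δ).deleteEdges (↑E'' : Set (Sym2 (Fin n)))) (inY n k) ≤
        edgesWithin G (inY n k))
    (hq : qIndex G > (n : ℝ) - 1)
    (x : Fin n → ℝ) (hx : ∀ v, 0 < x v)
    (heig : qMatrix G *ᵥ x = qIndex G • x)
    (hle : ∀ v, x v ≤ 1) (hattain : ∃ v, x v = 1)
    (j : Fin n) (hj : inY n k j ∨ inZ n δ j) :
    1 - x j ≤ (((δ : ℝ) - k + 2) * ((k : ℝ) + 3) + 4) / (2 * (qIndex G - n + 1)) := by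
  have hgap := eigenvector_gap G (qIndex G) x (fun v => (hx v).le) heig hle hattain j
  rw [Fintype.card_fin] at hgap
  have hcard : (nonNeighbors G j).card ≤ (δ - k + 2) + E'.card := by
    rw [hG]
    exact card_nonNeighbors_le n k δ (by omega) hδk E' j hj
  have hE4 : 4 * E'.card ≤ (δ - k + 2) * (k - 1) + 4 := by
    rw [hE.2]
    omega
  have hcardR : ((nonNeighbors G j).card : ℝ) ≤ ((δ : ℝ) - k + 2) + E'.card := by
    have h : ((nonNeighbors G j).card : ℝ) ≤ ((δ - k + 2 + E'.card : ℕ) : ℝ) := by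
      exact_mod_cast hcard
    simpa [Nat.cast_sub hδk] using h
  have hE4R : 4 * (E'.card : ℝ) ≤ ((δ : ℝ) - k + 2) * ((k : ℝ) - 1) + 4 := by
    have h : ((4 * E'.card : ℕ) : ℝ) ≤ (((δ - k + 2) * (k - 1) + 4 : ℕ) : ℝ) := by
      exact_mod_cast hE4
    simpa [Nat.cast_sub hδk, Nat.cast_sub (show 1 ≤ k by omega)] using h
  rw [le_div_iff₀ (by linarith)]
  linarith [hle j]

end QGraph
end

section
/- Let δ ≥ k ≥ 3 and n ≥ F(k,δ), and let G be a connected graph of order n with m edges and Q-index q(G) ≥ 2(n−δ+k−3). Then m > n(n−1)/2 − (δ−k+3)(n−δ−2). -/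
/-!
Write `d v` for the degree of `v`. The proof rests on the classical bound
`q(G) ≤ 2m/(n-1) + n - 2` for graphs without isolated vertices (`qIndex_le`).

If `Q x = μ x` with `x ≠ 0`, evaluate the eigenvalue equation at a vertex `v` maximizing `|x v| / d v`:
this gives `μ * d v ≤ (d v)² + S`, where `S` is the sum of the degrees of the neighbours of `v`.
Clearly `S ≤ (n-1) * d v`, and since each non-neighbour of `v` has degree at least one,
`S ≤ 2m - (n-1)`. Combining both estimates yields `μ (n-1) ≤ (n-1)² + 2m - (n-1)`.

With `q(G) ≥ 2(n-δ+k-3)` this gives `m ≥ n(n-1)/2 - (δ-k+2)(n-1)`, which exceeds the claimed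
bound as soon as `n > δ + 2 + (δ-k+2)(δ+1)`; the polynomial `F k δ` is larger than that.
-/

open Finset Matrix

attribute [local instance] Classical.propDecidable

namespace QGraph

variable {V : Type*} [Fintype V] [DecidableEq V]

/-- Every eigenvalue `μ` of `Q(G)` satisfies `μ * d v ≤ (d v)² + ∑_{w ~ v} d w` for some vertex `v`,
provided that there are no isolated vertices. -/
theorem exists_vertex_eigenvalue_bound (G : SimpleGraph V) (hpos : ∀ v, 0 < G.degree v)
    (μ : ℝ) (x : V → ℝ) (hx : x ≠ 0) (he : qMatrix G *ᵥ x = μ • x) :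
    ∃ v, μ * G.degree v ≤ (G.degree v : ℝ) ^ 2 + ∑ w ∈ G.neighborFinset v, (G.degree w : ℝ) := by
  obtain ⟨u, hu⟩ : ∃ u, x u ≠ 0 := Function.ne_iff.mp hx
  have hd : ∀ v, (0 : ℝ) < G.degree v := fun v => by exact_mod_cast hpos v
  obtain ⟨v, -, hv⟩ := Finset.exists_max_image Finset.univ
    (fun v => |x v| / (G.degree v : ℝ)) ⟨u, Finset.mem_univ u⟩
  refine ⟨v, ?_⟩
  set c : ℝ := |x v| / (G.degree v : ℝ) with hc
  have hc0 : 0 < c := (div_pos (abs_pos.mpr hu) (hd u)).trans_le (hv u (Finset.mem_univ u))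
  have hle : ∀ w, |x w| ≤ c * G.degree w := fun w =>
    (div_le_iff₀ (hd w)).mp (hv w (Finset.mem_univ w))
  have hxv : |x v| = c * G.degree v := by rw [hc, div_mul_cancel₀ _ (hd v).ne']
  have hev : G.degree v * x v + ∑ w ∈ G.neighborFinset v, x w = μ * x v := by
    have h := congrFun he v
    simp only [qMatrix, Matrix.mulVec, dotProduct, Matrix.of_apply, add_mul,
      Finset.sum_add_distrib, Pi.smul_apply, smul_eq_mul, ite_mul, zero_mul, one_mul,
      Finset.sum_ite_eq, Finset.mem_univ, if_true] at h
    rw [← h, ← Finset.sum_filter]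
    congr 2
    ext w
    simp
  have hsum : |∑ w ∈ G.neighborFinset v, x w| ≤ c * ∑ w ∈ G.neighborFinset v, (G.degree w : ℝ) := by
    rw [Finset.mul_sum]
    exact (Finset.abs_sum_le_sum_abs _ _).trans (Finset.sum_le_sum fun w _ => hle w)
  have habs : (μ - G.degree v) * |x v| ≤ |∑ w ∈ G.neighborFinset v, x w| := by
    have h : ∑ w ∈ G.neighborFinset v, x w = (μ - G.degree v) * x v := by linarith
    rw [h, abs_mul]
    exact mul_le_mul_of_nonneg_right (le_abs_self _) (abs_nonneg _)
  rw [hxv] at habs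
  refine le_of_mul_le_mul_left ?_ hc0
  nlinarith

/-- In the degree sum `2m`, the vertex `v` contributes `d v` and each of the `n - 1 - d v`
non-neighbours contributes at least one, which leaves at most `2m - (n-1)` for the neighbours. -/
theorem sum_neighbor_degree_le (G : SimpleGraph V) (hpos : ∀ v, 0 < G.degree v) (v : V) :
    ∑ w ∈ G.neighborFinset v, (G.degree w : ℝ)
      ≤ 2 * (G.edgeFinset.card : ℝ) - ((Fintype.card V : ℝ) - 1) := by
  have hsum : ∑ w, (G.degree w : ℝ) = 2 * (G.edgeFinset.card : ℝ) := by
    exact_mod_cast G.sum_degrees_eq_twice_card_edges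
  have hv : v ∉ G.neighborFinset v := by simp
  have hsplit := Finset.sum_add_sum_compl (insert v (G.neighborFinset v))
    (fun w => (G.degree w : ℝ))
  rw [Finset.sum_insert hv] at hsplit
  have hcompl : (((insert v (G.neighborFinset v))ᶜ).card : ℝ)
      ≤ ∑ w ∈ (insert v (G.neighborFinset v))ᶜ, (G.degree w : ℝ) := by
    rw [Finset.card_eq_sum_ones, Nat.cast_sum]
    exact Finset.sum_le_sum fun w _ => by exact_mod_cast hpos w
  have hcard := Finset.card_add_card_compl (insert v (G.neighborFinset v))
  rw [Finset.card_insert_of_notMem hv, G.card_neighborFinset_eq_degree] at hcard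
  have hcard' : (G.degree v : ℝ) + 1 + ((insert v (G.neighborFinset v))ᶜ).card
      = Fintype.card V := by exact_mod_cast hcard
  linarith

/-- The bound `q(G) ≤ 2m/(n-1) + n - 2` for graphs without isolated vertices. -/
theorem qIndex_le (G : SimpleGraph V) (hpos : ∀ v, 0 < G.degree v)
    (hn : 1 < Fintype.card V) :
    qIndex G ≤ 2 * (G.edgeFinset.card : ℝ) / ((Fintype.card V : ℝ) - 1)
      + ((Fintype.card V : ℝ) - 2) := by
  have hN : (2 : ℝ) ≤ Fintype.card V := by exact_mod_cast hn
  have hN0 : (0 : ℝ) < (Fintype.card V : ℝ) - 1 := by linarith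
  apply Real.sSup_le
  · rintro μ ⟨x, hx, he⟩
    obtain ⟨v, hv⟩ := exists_vertex_eigenvalue_bound G hpos μ x hx he
    have hS := sum_neighbor_degree_le G hpos v
    have hdeg : ∀ w, (G.degree w : ℝ) ≤ (Fintype.card V : ℝ) - 1 := fun w => by
      have h : G.degree w + 1 ≤ Fintype.card V := G.degree_lt_card_verts w
      have h' : (G.degree w : ℝ) + 1 ≤ Fintype.card V := by exact_mod_cast h
      linarith
    have hS' : ∑ w ∈ G.neighborFinset v, (G.degree w : ℝ)
        ≤ G.degree v * ((Fintype.card V : ℝ) - 1) := by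
      have h := Finset.sum_le_card_nsmul (G.neighborFinset v) (fun w => (G.degree w : ℝ)) _
        (fun w _ => hdeg w)
      rwa [G.card_neighborFinset_eq_degree, nsmul_eq_mul] at h
    have hd : (0 : ℝ) < G.degree v := by exact_mod_cast hpos v
    have hdv := hdeg v
    generalize ∑ w ∈ G.neighborFinset v, (G.degree w : ℝ) = S at hv hS hS'
    generalize (G.degree v : ℝ) = d at hv hS' hd hdv
    rw [← sub_le_iff_le_add, le_div_iff₀ hN0]
    generalize (G.edgeFinset.card : ℝ) = e at hS ⊢
    obtain ⟨N, hNe⟩ : ∃ N : ℝ, N = (Fintype.card V : ℝ) - 1 := ⟨_, rfl⟩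
    have hNe' : (Fintype.card V : ℝ) = N + 1 := by linarith
    rw [hNe'] at *
    simp only [add_sub_cancel_right] at *
    -- With `M = 2e - N`, the expression `d + min N (M/d)` is at most `N + M/N`.
    rcases le_total (d * N) (2 * e - N) with h | h
    · have hμ : μ ≤ d + N := le_of_mul_le_mul_right (by nlinarith) hd
      nlinarith
    · have hμ : μ * d ≤ d ^ 2 + (2 * e - N) := by linarith
      refine le_of_mul_le_mul_right ?_ hd
      nlinarith [mul_le_mul_of_nonneg_right hμ hN0.le,
        mul_nonneg (sub_nonneg.mpr h) (sub_nonneg.mpr hdv)]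
  · have : 0 ≤ 2 * (G.edgeFinset.card : ℝ) / ((Fintype.card V : ℝ) - 1) := by positivity
    linarith

/-- `F k δ` exceeds the threshold at which the edge bound becomes strict. -/
theorem lt_F (k δ : ℕ) (hk : 3 ≤ k) (hδk : k ≤ δ) :
    (δ : ℝ) + 2 + ((δ : ℝ) - k + 2) * (δ + 1) < F k δ := by
  obtain ⟨t, rfl⟩ := Nat.exists_eq_add_of_le hδk
  have hk' : (3 : ℝ) ≤ k := by exact_mod_cast hk
  have ht : (0 : ℝ) ≤ t := Nat.cast_nonneg t
  have h1 : 0 ≤ ((k : ℝ) ^ 2 + 2 * k - 4) * (t : ℝ) ^ 2 :=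
    mul_nonneg (by nlinarith) (sq_nonneg _)
  have h2 : 0 ≤ (5 * (k : ℝ) ^ 2 + 10 * k - 12) * t := mul_nonneg (by nlinarith) ht
  unfold F
  push_cast
  nlinarith

/-- For `δ ≥ k ≥ 3`, `n ≥ F(k,δ)` and a connected graph `G` of order `n`
with `m` edges and `q(G) ≥ 2(n-δ+k-3)`, one has `m > n(n-1)/2 - (δ-k+3)(n-δ-2)`. -/
theorem stmt19 (n k δ : ℕ) (hk : 3 ≤ k) (hδk : k ≤ δ) (hn : (n : ℝ) ≥ F k δ)
    (G : SimpleGraph (Fin n)) (hconn : G.Connected)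
    (m : ℕ) (hm : G.edgeFinset.card = m)
    (hq : qIndex G ≥ 2 * ((n : ℝ) - δ + k - 3)) :
    (m : ℝ) > (n : ℝ) * ((n : ℝ) - 1) / 2
      - ((δ : ℝ) - k + 3) * ((n : ℝ) - δ - 2) := by
  have hF := (lt_F k δ hk hδk).trans_le hn
  have hk' : (3 : ℝ) ≤ k := by exact_mod_cast hk
  have hδ' : (k : ℝ) ≤ δ := by exact_mod_cast hδk
  have hn2 : (2 : ℝ) < n := by nlinarith
  have hn1 : 1 < n := by
    have : 2 < n := by exact_mod_cast hn2
    omega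
  have : Nontrivial (Fin n) := Fin.nontrivial_iff_two_le.mpr hn1
  have hpos : ∀ v, 0 < G.degree v := fun v => hconn.preconnected.degree_pos_of_nontrivial v
  have hle := qIndex_le G hpos (by simpa using hn1)
  rw [hm, Fintype.card_fin] at hle
  have hN0 : (0 : ℝ) < (n : ℝ) - 1 := by linarith
  have h : 2 * ((n : ℝ) - δ + k - 3) - (n - 2) ≤ 2 * (m : ℝ) / ((n : ℝ) - 1) := by linarith
  rw [le_div_iff₀ hN0] at h
  nlinarith

end QGraph
end
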